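/- arXiv:math/0104131 — 2 statements merged into one kernel-verified Lean document; each statement's English description precedes it below -/
import Mathlib

section
/- Let p > 3 be a prime such that q = (p+1)/2 is also prime, and let p̃ denote the maximal odd divisor of p − 1. Then 4·C_d(p) = C_d(p+1) + 2·C̄_u(2p̃+1). -/
open Finset

/-- Number of directed circulant graphs of odd prime order `p`:
`C_d(p) = (1/(p-1))·∑_{r | p-1} φ(r)·2^{(p-1)/r}`. -/
def Cd (p : ℕ) : ℚ :=
  (1 / ((p : ℚ) - 1)) *
    ∑ r ∈ (p - 1).divisors, (Nat.totient r : ℚ) * (2 : ℚ) ^ ((p - 1) / r)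

/-- Number of directed circulant graphs of order `2q`, `q` an odd prime:
`C_d(2q) = 2·(1/(q-1))·∑_{r | q-1} φ(r)·4^{(q-1)/r}`. -/
def CdTwice (q : ℕ) : ℚ :=
  2 * ((1 / ((q : ℚ) - 1)) *
    ∑ r ∈ (q - 1).divisors, (Nat.totient r : ℚ) * (4 : ℚ) ^ ((q - 1) / r))

/-- For odd `p̃`, `C̄_u(2p̃+1) = (1/p̃)·∑_{r | p̃} φ(r)·2^{p̃/r}`
(the formula counting undirected circulants of order `2p̃+1` when that is prime). -/
def CuBar (pt : ℕ) : ℚ :=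
  (1 / (pt : ℚ)) * ∑ r ∈ pt.divisors, (Nat.totient r : ℚ) * (2 : ℚ) ^ (pt / r)

/-- The divisors of `2 ^ (j + 1) * n`, `n` odd, are those of `2 ^ j * n` together with the
products `2 ^ (j + 1) * s` for `s ∣ n`. -/
theorem sum_divisors_two_pow_succ_mul {M : Type*} [AddCommMonoid M] {n : ℕ} (hn : Odd n) (j : ℕ)
    (f : ℕ → M) :
    ∑ r ∈ (2 ^ (j + 1) * n).divisors, f r =
      ∑ r ∈ (2 ^ j * n).divisors, f r + ∑ s ∈ n.divisors, f (2 ^ (j + 1) * s) := by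
  have hn0 : n ≠ 0 := hn.pos.ne'
  have hinj : Function.Injective fun s : ℕ => 2 ^ (j + 1) * s :=
    mul_right_injective₀ (by positivity)
  have hdisj : Disjoint (2 ^ j * n).divisors
      (n.divisors.image fun s => 2 ^ (j + 1) * s) := by
    rw [Finset.disjoint_left]
    intro r hr hr'
    obtain ⟨s, -, rfl⟩ := Finset.mem_image.mp hr'
    have h := Nat.dvd_of_mem_divisors hr
    rw [pow_succ, mul_assoc] at h
    have h2 : 2 ∣ n := (dvd_mul_right 2 s).trans (Nat.dvd_of_mul_dvd_mul_left (by positivity) h)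
    exact hn.not_two_dvd_nat h2
  have hunion : (2 ^ (j + 1) * n).divisors =
      (2 ^ j * n).divisors ∪ n.divisors.image fun s => 2 ^ (j + 1) * s := by
    ext r
    simp only [Finset.mem_union, Finset.mem_image, Nat.mem_divisors]
    constructor
    · rintro ⟨hr, h0⟩
      obtain ⟨a, b, hb, rfl⟩ := Nat.exists_eq_two_pow_mul_odd (ne_zero_of_dvd_ne_zero h0 hr)
      have hbn : b ∣ n :=
        (hb.coprime_two_right.pow_right (j + 1)).dvd_of_dvd_mul_left ((dvd_mul_left b _).trans hr)
      have ha : a ≤ j + 1 := (Nat.pow_dvd_pow_iff_le_right (by norm_num : 1 < 2)).mp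
        ((hn.coprime_two_left.pow_left a).dvd_of_dvd_mul_right ((dvd_mul_right _ b).trans hr))
      rcases ha.lt_or_eq with ha | rfl
      · exact Or.inl ⟨mul_dvd_mul (pow_dvd_pow 2 (by omega)) hbn, by positivity⟩
      · exact Or.inr ⟨b, ⟨hbn, hn0⟩, rfl⟩
    · rintro (⟨hr, -⟩ | ⟨s, ⟨hs, -⟩, rfl⟩)
      · exact ⟨hr.trans (mul_dvd_mul_right (pow_dvd_pow 2 j.le_succ) n), by positivity⟩
      · exact ⟨mul_dvd_mul_left _ hs, by positivity⟩
  rw [hunion, Finset.sum_union hdisj, Finset.sum_image hinj.injOn]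

/-- If `p > 3` and `q = (p+1)/2` are both prime and `p̃` is the maximal odd
divisor of `p - 1` (i.e. `p - 1 = 2^k·p̃` with `p̃` odd), then
`4·C_d(p) = C_d(p+1) + 2·C̄_u(2p̃+1)`. -/
theorem four_mul_Cd (p q k pt : ℕ) (hp : p.Prime) (hp3 : 3 < p)
    (hq : q.Prime) (hpq : p + 1 = 2 * q) (hpt : Odd pt)
    (hfac : p - 1 = 2 ^ k * pt) :
    4 * Cd p = CdTwice q + 2 * CuBar pt := by
  obtain _ | j := k
  · obtain ⟨m, hm⟩ := hpt
    omega
  have hqfac : q - 1 = 2 ^ j * pt := by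
    rw [pow_succ, mul_right_comm] at hfac
    omega
  have hpQ : (p : ℚ) - 1 = 2 ^ (j + 1) * pt := by
    rw [← Nat.cast_pred hp.pos, hfac]
    push_cast
    rfl
  have hqQ : (q : ℚ) - 1 = 2 ^ j * pt := by
    rw [← Nat.cast_pred hq.pos, hqfac]
    push_cast
    rfl
  have hpt0 : (pt : ℚ) ≠ 0 := Nat.cast_ne_zero.mpr hpt.pos.ne'
  have hlow : ∑ r ∈ (2 ^ j * pt).divisors, (Nat.totient r : ℚ) * 2 ^ (2 ^ (j + 1) * pt / r) =
      ∑ r ∈ (2 ^ j * pt).divisors, (Nat.totient r : ℚ) * 4 ^ (2 ^ j * pt / r) := by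
    refine Finset.sum_congr rfl fun r hr => ?_
    rw [pow_succ', mul_assoc, Nat.mul_div_assoc 2 (Nat.dvd_of_mem_divisors hr), pow_mul]
    norm_num
  have hhigh : ∑ s ∈ pt.divisors, (Nat.totient (2 ^ (j + 1) * s) : ℚ) *
        2 ^ (2 ^ (j + 1) * pt / (2 ^ (j + 1) * s)) =
      2 ^ j * ∑ s ∈ pt.divisors, (Nat.totient s : ℚ) * 2 ^ (pt / s) := by
    rw [Finset.mul_sum]
    refine Finset.sum_congr rfl fun s hs => ?_
    have hs_odd : Odd s := hpt.of_dvd_nat (Nat.dvd_of_mem_divisors hs)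
    rw [Nat.totient_mul (hs_odd.coprime_two_left.pow_left (j + 1)),
      Nat.totient_prime_pow_succ Nat.prime_two, Nat.mul_div_mul_left _ _ (by positivity)]
    push_cast
    ring
  rw [Cd, CdTwice, CuBar, hfac, hqfac, hpQ, hqQ, sum_divisors_two_pow_succ_mul hpt, hlow, hhigh]
  field_simp
  ring
end

section
/- For every odd prime p, the alternating sum c_o(p, −1) := (1/(p-1))·( ∑_{r | p-1, r even} φ(r) + ∑ِ_{r | p-1, r odd} φ(r)·(−1)^{(p-1)/(2r)} ) equals 1 if p ≡ 1 (mod 4) and equals 0 if p ≡ 3 (mod 4). -/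
open Finset

/-- The alternating sum `c_o(p, -1)` for an odd prime `p`:
`(1/(p-1))·(∑_{r | p-1, r even} φ(r) + ∑_{r | p-1, r odd} φ(r)·(−1)^{(p-1)/(2r)})`. -/
def cOrientedAtNegOne (p : ℕ) : ℚ :=
  (1 / ((p : ℚ) - 1)) *
    ((∑ r ∈ (p - 1).divisors.filter (fun r => Even r), (Nat.totient r : ℚ)) +
      ∑ r ∈ (p - 1).divisors.filter (fun r => Odd r),
        (Nat.totient r : ℚ) * (-1 : ℚ) ^ ((p - 1) / (2 * r)))

theorem sum_totient_even_add_odd (n : ℕ) :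
    (∑ r ∈ n.divisors.filter (fun r => Even r), (Nat.totient r : ℚ)) +
      ∑ r ∈ n.divisors.filter (fun r => Odd r), (Nat.totient r : ℚ) = n := by
  simp_rw [← Nat.not_even_iff_odd]
  rw [Finset.sum_filter_add_sum_filter_not]
  exact_mod_cast Nat.sum_totient n

theorem filter_odd_divisors_two_mul {m : ℕ} (hm : Odd m) :
    (2 * m).divisors.filter (fun r => Odd r) = m.divisors := by
  ext r
  have hm0 : m ≠ 0 := hm.pos.ne'
  simp only [Finset.mem_filter, Nat.mem_divisors]
  constructor
  · rintro ⟨⟨hr, -⟩, hro⟩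
    exact ⟨(Nat.coprime_two_right.mpr hro).dvd_of_dvd_mul_left hr, hm0⟩
  · rintro ⟨hr, -⟩
    exact ⟨⟨hr.mul_left 2, by positivity⟩, hm.of_dvd_nat hr⟩

/-- For every odd prime `p`, `c_o(p,−1) = 1` if `p ≡ 1 (mod 4)`
and `c_o(p,−1) = 0` if `p ≡ 3 (mod 4)`. -/
theorem cOriented_neg_one (p : ℕ) (hp : p.Prime) (hodd : Odd p) :
    (p % 4 = 1 → cOrientedAtNegOne p = 1) ∧
    (p % 4 = 3 → cOrientedAtNegOne p = 0) := by
  have hp2 := hp.two_le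
  constructor <;> intro h
  · obtain ⟨k, rfl⟩ : ∃ k, p = 4 * k + 1 := ⟨p / 4, by omega⟩
    have hk : (k : ℚ) ≠ 0 := by
      have : k ≠ 0 := by omega
      exact_mod_cast this
    have hsum : ∑ r ∈ (4 * k).divisors.filter (fun r => Odd r),
          (Nat.totient r : ℚ) * (-1 : ℚ) ^ (4 * k / (2 * r)) =
        ∑ r ∈ (4 * k).divisors.filter (fun r => Odd r), (Nat.totient r : ℚ) := by
      refine Finset.sum_congr rfl fun r hr => ?_
      simp only [Finset.mem_filter, Nat.mem_divisors] at hr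
      obtain ⟨⟨hr, -⟩, hro⟩ := hr
      obtain ⟨c, rfl⟩ : r ∣ k :=
        (Nat.Coprime.pow_right 2 (Nat.coprime_two_right.mpr hro)).dvd_of_dvd_mul_left hr
      have hdiv : 4 * (r * c) / (2 * r) = 2 * c :=
        Nat.div_eq_of_eq_mul_right (by have := hro.pos; omega) (by ring)
      rw [hdiv, (even_two_mul c).neg_one_pow, mul_one]
    rw [cOrientedAtNegOne, Nat.add_sub_cancel, hsum, sum_totient_even_add_odd]
    push_cast
    field_simp
    ring
  · obtain ⟨m, hm, rfl⟩ : ∃ m, Odd m ∧ p = 2 * m + 1 :=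
      ⟨p / 2, by rw [Nat.odd_iff]; omega, by omega⟩
    have htotal := sum_totient_even_add_odd (2 * m)
    have hodd_sum : ∑ r ∈ m.divisors, (Nat.totient r : ℚ) = m := by
      exact_mod_cast Nat.sum_totient m
    have hsum : ∑ r ∈ m.divisors, (Nat.totient r : ℚ) * (-1 : ℚ) ^ (2 * m / (2 * r)) =
        -∑ r ∈ m.divisors, (Nat.totient r : ℚ) := by
      rw [← Finset.sum_neg_distrib]
      refine Finset.sum_congr rfl fun r hr => ?_
      have hodd_div : Odd (m / r) :=
        hm.of_dvd_nat (Nat.div_dvd_of_dvd (Nat.dvd_of_mem_divisors hr))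
      rw [Nat.mul_div_mul_left _ _ two_pos, hodd_div.neg_one_pow, mul_neg_one]
    rw [filter_odd_divisors_two_mul hm, hodd_sum] at htotal
    rw [cOrientedAtNegOne, Nat.add_sub_cancel, filter_odd_divisors_two_mul hm, hsum, hodd_sum,
      eq_sub_of_add_eq htotal]
    push_cast
    ring
end
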